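/- Let p ∈ [0, 2α). For every ε with 0 < ε ≤ (2α − p)/2 there exists N_ε such that for all N > N_ε and all n ≥ 0, almost surely E[ (θ_{n+1} − θ_n)^p | F_{n−m_N} ] ≤ (1 + 4p/(2α − p)) · (δ_N / log₂ N)^{p/(2α + ε)}. -/

import Mathlib

open MeasureTheory ProbabilityTheory Real Filter Set

noncomputable section

/-- One step of the `N`-BRW: each of the `N` particles branches into two, the children jump
according to `jump`, and only the `N` right-most particles are kept; the result is the
sorted (ascending) vector of the `N` retained positions. -/
def brwStep (N : ℕ) (pos : Fin N → ℝ) (jump : Fin N → Fin 2 → ℝ) : Fin N → ℝ := fun i =>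
  (((Finset.univ : Finset (Fin N × Fin 2)).val.map fun p => pos p.1 + jump p.1 p.2).sort
      (· ≤ ·)).getD (N + i) 0

/-- The `N`-BRW started from the sorted configuration `x0`, driven by the jumps `jump`:
`brw N x0 jump n i` is the position `X_{i+1}(n)` of the `(i+1)`-th lowest particle at time `n`. -/
def brw (N : ℕ) (x0 : Fin N → ℝ) (jump : ℕ → Fin N → Fin 2 → ℝ) : ℕ → Fin N → ℝ
  | 0 => x0
  | n + 1 => brwStep N (brw N x0 jump n) (jump n)

/-- Position `X_N(n)` of the right-most particle of the `N`-BRW started at the origin. -/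
def brwMax (N : ℕ) (jump : ℕ → Fin N → Fin 2 → ℝ) (n : ℕ) : ℝ :=
  ⨆ i, brw N (fun _ => 0) jump n i

/-- Position `X_1(n)` of the left-most particle of the `N`-BRW started at the origin. -/
def brwMin (N : ℕ) (jump : ℕ → Fin N → Fin 2 → ℝ) (n : ℕ) : ℝ :=
  ⨅ i, brw N (fun _ => 0) jump n i

/-- The `(N,ℓ)`-discretised stairs process driven by the jumps `Y`
(with the convention `R(k) = 0` for `k ≤ 0`, realised via truncated subtraction). -/
def dsp (N ℓ : ℕ) (Y : ℕ → Fin N → Fin 2 → ℝ) : ℕ → ℝ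
  | 0 => 0
  | n + 1 => max (dsp N ℓ Y n) (dsp N ℓ Y (n - ℓ) + ⨆ p : Fin N × Fin 2, Y n p.1 p.2)

/-- The tail `P(X > x) = 1/h(x)` of the random variable `X` under `P`. -/
def tail {Ω : Type*} [MeasurableSpace Ω] (P : Measure Ω) (X : Ω → ℝ) (x : ℝ) : ℝ :=
  (P {ω | x < X ω}).toReal

/-- Generalized inverse `h⁻¹(y)` of `h(x) = 1 / P(X > x)`. -/
def hinv {Ω : Type*} [MeasurableSpace Ω] (P : Measure Ω) (X : Ω → ℝ) (y : ℝ) : ℝ :=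
  sInf {x : ℝ | 0 ≤ x ∧ tail P X x ≤ y⁻¹}

/-- The scaling sequence `c_N = h⁻¹(2 N log₂ N)`. -/
def cN {Ω : Type*} [MeasurableSpace Ω] (P : Measure Ω) (X : Ω → ℝ) (N : ℕ) : ℝ :=
  hinv P X (2 * N * Real.logb 2 N)

/-- The σ-algebra `F_n` generated by the jump variables `ξ k i j`, `0 ≤ k ≤ n-1`
(the trivial σ-algebra for `n = 0`). -/
def brwFilt {Ω : Type*} [MeasurableSpace Ω] (N : ℕ) (ξ : ℕ → Fin N → Fin 2 → Ω → ℝ) (n : ℕ) :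
    MeasurableSpace Ω :=
  ⨆ (k : ℕ) (_ : k < n) (i : Fin N) (j : Fin 2), MeasurableSpace.comap (ξ k i j) inferInstance

/-- `θ^{(m)}_n = max_{0 ≤ k ≤ n} (𝒴_N(k) − R^{N,m}(k))`. -/
def theta (N m : ℕ) (Y : ℕ → Fin N → Fin 2 → ℝ) (n : ℕ) : ℝ :=
  (Finset.range (n + 1)).sup' Finset.nonempty_range_add_one fun k => brwMax N Y k - dsp N m Y k

theorem sorted_lt_iff (L : List ℝ) (hL : L.Pairwise (· ≤ ·)) (k : ℕ) (hk : k < L.length) (x : ℝ) :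
    x < L[k] ↔ L.length - k ≤ L.countP (fun y => decide (x < y)) := by
  constructor
  · intro h
    have h1 : (L.drop k).countP (fun y => decide (x < y)) = (L.drop k).length := by
      rw [List.countP_eq_length]
      intro y hy
      rw [List.drop_eq_getElem_cons hk] at hy
      have hp : (L[k] :: L.drop (k+1)).Pairwise (· ≤ ·) := by
        rw [← List.drop_eq_getElem_cons hk]; exact hL.drop
      rw [List.pairwise_cons] at hp
      rcases List.mem_cons.1 hy with rfl | hy
      · simpa using h
      · simpa using lt_of_lt_of_le h (hp.1 y hy)
    have h2 : (L.drop k).countP (fun y => decide (x < y)) ≤ L.countP (fun y => decide (x < y)) :=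
      (List.drop_sublist k L).countP_le
    rw [h1, List.length_drop] at h2
    exact h2
  · intro h
    by_contra hc
    push Not at hc
    have h1 : (L.take (k+1)).countP (fun y => decide (x < y)) = 0 := by
      rw [List.countP_eq_zero]
      intro y hy
      rw [List.mem_take_iff_getElem] at hy
      obtain ⟨j, hj, rfl⟩ := hy
      have hjk : j ≤ k := by omega
      have : L[j] ≤ L[k] := by
        rcases hjk.eq_or_lt with rfl | hlt
        · exact le_rfl
        · exact List.pairwise_iff_getElem.1 hL j k _ _ hlt
      simpa using this.trans hc
    have h2 : L.countP (fun y => decide (x < y)) = (L.take (k+1)).countP (fun y => decide (x < y))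
        + (L.drop (k+1)).countP (fun y => decide (x < y)) := by
      rw [← List.countP_append, List.take_append_drop]
    have h3 : (L.drop (k+1)).countP (fun y => decide (x < y)) ≤ (L.drop (k+1)).length :=
      List.countP_le_length
    rw [List.length_drop] at h3
    omega

/-- the sorted list of offspring positions -/
def offL (N : ℕ) (v : Fin N × Fin 2 → ℝ) : List ℝ :=
  ((Finset.univ : Finset (Fin N × Fin 2)).val.map v).sort (· ≤ ·)

theorem offL_length (N : ℕ) (v : Fin N × Fin 2 → ℝ) : (offL N v).length = N + N := by
  simp [offL]; omega

theorem offL_coe (N : ℕ) (v : Fin N × Fin 2 → ℝ) :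
    ((offL N v : List ℝ) : Multiset ℝ) = (Finset.univ : Finset (Fin N × Fin 2)).val.map v := by
  simp [offL]

theorem brwStep_eq (N : ℕ) (pos : Fin N → ℝ) (jump : Fin N → Fin 2 → ℝ) (i : Fin N) :
    brwStep N pos jump i = (offL N (fun p => pos p.1 + jump p.1 p.2))[N + i]'(by
      rw [offL_length]; omega) := by
  rw [brwStep, ← offL, List.getD_eq_getElem]

theorem lt_brwStep_iff (N : ℕ) (pos : Fin N → ℝ) (jump : Fin N → Fin 2 → ℝ) (i : Fin N) (x : ℝ) :
    x < brwStep N pos jump i ↔ N - i ≤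
      ((Finset.univ : Finset (Fin N × Fin 2)).filter
        (fun p => x < pos p.1 + jump p.1 p.2)).card := by
  rw [brwStep_eq, sorted_lt_iff]
  · rw [offL_length, ← Multiset.coe_countP, offL_coe, Multiset.countP_map]
    rw [show N + N - (N + (i:ℕ)) = N - i by omega]
    rfl
  · exact Multiset.pairwise_sort _ _

theorem brwStep_mem (N : ℕ) (pos : Fin N → ℝ) (jump : Fin N → Fin 2 → ℝ) (i : Fin N) :
    ∃ p : Fin N × Fin 2, brwStep N pos jump i = pos p.1 + jump p.1 p.2 := by
  have h : brwStep N pos jump i ∈ ((offL N (fun p => pos p.1 + jump p.1 p.2) : List ℝ) : Multiset ℝ) := by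
    rw [brwStep_eq]; simp
  rw [offL_coe, Multiset.mem_map] at h
  obtain ⟨p, _, hp⟩ := h
  exact ⟨p, hp.symm⟩

theorem brwStep_le (N : ℕ) (pos pos' : Fin N → ℝ) (jump : Fin N → Fin 2 → ℝ) (c : ℝ)
    (h : ∀ i, pos i ≤ c + pos' i) (i : Fin N) :
    brwStep N pos jump i ≤ c + brwStep N pos' jump i := by
  suffices H : brwStep N pos jump i - c ≤ brwStep N pos' jump i by linarith
  refine le_of_forall_lt fun x hx => ?_
  have hx' : x + c < brwStep N pos jump i := by linarith
  rw [lt_brwStep_iff] at hx' ⊢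
  refine hx'.trans (Finset.card_le_card ?_)
  intro p
  simp only [Finset.mem_filter, Finset.mem_univ, true_and]
  intro hp
  have := h p.1
  linarith

theorem sum_brwStep_le (N : ℕ) (pos : Fin N → ℝ) (jump : Fin N → Fin 2 → ℝ) (f : ℝ → ENNReal) :
    ∑ i, f (brwStep N pos jump i) ≤ ∑ p : Fin N × Fin 2, f (pos p.1 + jump p.1 p.2) := by
  set L := offL N (fun p => pos p.1 + jump p.1 p.2) with hL
  have hlen : L.length = N + N := offL_length _ _
  have h1 : ∑ p : Fin N × Fin 2, f (pos p.1 + jump p.1 p.2) = (L.map f).sum := by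
    rw [← Multiset.sum_coe, ← Multiset.map_coe, hL, offL_coe, Multiset.map_map]
    rfl
  have h2 : (L.map f).sum = ∑ j : Fin L.length, f (L[j]) := by
    rw [← Fin.sum_univ_fun_getElem]; rfl
  rw [h1, h2]
  let e : Fin N ↪ Fin L.length := ⟨fun i => ⟨N + i, by omega⟩, fun a b h => by
    simp only [Fin.mk.injEq] at h; ext; omega⟩
  calc ∑ i, f (brwStep N pos jump i) = ∑ i, f (L[e i]) := by
        refine Finset.sum_congr rfl fun i _ => ?_
        rw [brwStep_eq]; rfl
    _ = ∑ j ∈ Finset.univ.map e, f (L[j]) := by rw [Finset.sum_map]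
    _ ≤ _ := Finset.sum_le_sum_of_subset (Finset.subset_univ _)

theorem measurable_brwStep {Ω : Type*} (m : MeasurableSpace Ω) (N : ℕ) (pos : Ω → Fin N → ℝ)
    (jump : Ω → Fin N → Fin 2 → ℝ) (hp : ∀ i, Measurable[m] fun ω => pos ω i)
    (hj : ∀ i j, Measurable[m] fun ω => jump ω i j) (i : Fin N) :
    Measurable[m] fun ω => brwStep N (pos ω) (jump ω) i := by
  refine measurable_of_Ioi fun x => ?_
  have : (fun ω => brwStep N (pos ω) (jump ω) i) ⁻¹' Ioi x =
      {ω | N - (i:ℕ) ≤ ∑ p : Fin N × Fin 2, if x < pos ω p.1 + jump ω p.1 p.2 then 1 else 0} := by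
    ext ω
    simp only [mem_preimage, mem_Ioi, mem_ofPred_eq, lt_brwStep_iff, Finset.card_filter]
  rw [this]
  refine measurableSet_le measurable_const (Finset.measurable_sum _ fun p _ => ?_)
  exact Measurable.ite (measurableSet_lt measurable_const ((hp _).add (hj _ _)))
    measurable_const measurable_const

theorem measurable_brw {Ω : Type*} (m : MeasurableSpace Ω) (N : ℕ)
    (jump : ℕ → Fin N → Fin 2 → Ω → ℝ) (k : ℕ)
    (hj : ∀ l, l < k → ∀ i j, Measurable[m] (jump l i j)) (i : Fin N) :
    Measurable[m] fun ω => brw N (fun _ => 0) (fun l i j => jump l i j ω) k i := by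
  induction k generalizing i with
  | zero => exact measurable_const
  | succ k ih =>
    exact measurable_brwStep m N (fun ω => brw N (fun _ => 0) (fun l i j => jump l i j ω) k)
      (fun ω i j => jump k i j ω) (fun i => ih (fun l hl => hj l (by omega)) i)
      (hj k (by omega)) i

theorem brw_nonneg (N : ℕ) (jump : ℕ → Fin N → Fin 2 → ℝ) (h : ∀ k i j, 0 ≤ jump k i j)
    (k : ℕ) (i : Fin N) : 0 ≤ brw N (fun _ => 0) jump k i := by
  induction k generalizing i with
  | zero => simp [brw]
  | succ k ih =>
    obtain ⟨p, hp⟩ := brwStep_mem N (brw N (fun _ => 0) jump k) (jump k) i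
    rw [brw, hp]
    exact add_nonneg (ih _) (h _ _ _)

theorem brw_shift_le (N : ℕ) (x0 : Fin N → ℝ) (jump : ℕ → Fin N → Fin 2 → ℝ) (a k : ℕ)
    (i : Fin N) :
    brw N x0 jump (a + k) i ≤ (⨆ i, brw N x0 jump a i) +
      brw N (fun _ => 0) (fun l => jump (a + l)) k i := by
  induction k generalizing i with
  | zero =>
    simp only [brw, add_zero]
    exact le_ciSup (f := fun i => brw N x0 jump a i) (Set.finite_range _).bddAbove i
  | succ k ih =>
    exact brwStep_le N _ _ _ _ ih i

/-- the dominating variable -/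
def domW (N m : ℕ) (Y : ℕ → Fin N → Fin 2 → ℝ) (n : ℕ) : ℝ :=
  ⨆ p : Fin N × Fin 2, min (Y n p.1 p.2)
    (brw N (fun _ => 0) (fun l => Y ((n - m) + l)) (n - (n - m)) p.1)

theorem theta_succ (N m : ℕ) (Y : ℕ → Fin N → Fin 2 → ℝ) (n : ℕ) :
    theta N m Y (n + 1) = max (theta N m Y n) (brwMax N Y (n+1) - dsp N m Y (n+1)) := by
  unfold theta
  rw [max_comm]
  have : Finset.range (n + 1 + 1) = insert (n+1) (Finset.range (n+1)) := Finset.range_add_one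
  simp only [this]
  rw [Finset.sup'_insert]

theorem le_theta (N m : ℕ) (Y : ℕ → Fin N → Fin 2 → ℝ) (n k : ℕ) (hk : k ≤ n) :
    brwMax N Y k - dsp N m Y k ≤ theta N m Y n :=
  Finset.le_sup' (fun k => brwMax N Y k - dsp N m Y k) (by simp; omega)

theorem domW_nonneg (N m : ℕ) (Y : ℕ → Fin N → Fin 2 → ℝ) (hY : ∀ k i j, 0 ≤ Y k i j) (n : ℕ) :
    0 ≤ domW N m Y n :=
  Real.iSup_nonneg fun _ => le_min (hY _ _ _) (brw_nonneg _ _ (fun _ _ _ => hY _ _ _) _ _)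

theorem theta_le (N m : ℕ) (hN : 0 < N) (Y : ℕ → Fin N → Fin 2 → ℝ) (hY : ∀ k i j, 0 ≤ Y k i j)
    (n : ℕ) : theta N m Y (n+1) - theta N m Y n ≤ domW N m Y n := by
  have : Nonempty (Fin N) := ⟨⟨0, hN⟩⟩
  have h0 := domW_nonneg N m Y hY n
  rw [theta_succ, sub_le_iff_le_add]
  refine max_le (by linarith) ?_
  rw [sub_le_iff_le_add]
  refine ciSup_le fun i => ?_
  obtain ⟨p, hp⟩ := brwStep_mem N (brw N (fun _ => 0) Y n) (Y n) i
  rw [brw, hp]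
  have hW : min (Y n p.1 p.2)
      (brw N (fun _ => 0) (fun l => Y ((n - m) + l)) (n - (n - m)) p.1) ≤ domW N m Y n :=
    le_ciSup (f := fun p : Fin N × Fin 2 => min (Y n p.1 p.2)
      (brw N (fun _ => 0) (fun l => Y ((n - m) + l)) (n - (n - m)) p.1))
      (Set.finite_range _).bddAbove p
  have h1 : dsp N m Y n ≤ dsp N m Y (n+1) := by rw [dsp.eq_2]; exact le_max_left _ _
  have h2 : dsp N m Y (n - m) + Y n p.1 p.2 ≤ dsp N m Y (n+1) := by
    have : Y n p.1 p.2 ≤ ⨆ p : Fin N × Fin 2, Y n p.1 p.2 :=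
      le_ciSup (f := fun p : Fin N × Fin 2 => Y n p.1 p.2) (Set.finite_range _).bddAbove p
    rw [dsp.eq_2]
    exact le_trans (by linarith) (le_max_right _ _)
  have h3 := le_theta N m Y n n le_rfl
  have h4 := le_theta N m Y n (n-m) (by omega)
  have h5 : brw N (fun _ => 0) Y n p.1 ≤ brwMax N Y n :=
    le_ciSup (f := fun i => brw N (fun _ => 0) Y n i) (Set.finite_range _).bddAbove p.1
  have h6 := brw_shift_le N (fun _ => 0) Y (n - m) (n - (n-m)) p.1
  rw [show n - m + (n - (n-m)) = n by omega] at h6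
  rw [← brwMax] at h6
  rcases min_cases (Y n p.1 p.2)
      (brw N (fun _ => 0) (fun l => Y ((n - m) + l)) (n - (n - m)) p.1) with h | h <;>
  rw [h.1] at hW <;> linarith

theorem theta_mono (N m : ℕ) (Y : ℕ → Fin N → Fin 2 → ℝ) (n : ℕ) :
    0 ≤ theta N m Y (n+1) - theta N m Y n := by
  rw [theta_succ, sub_nonneg]; exact le_max_left _ _

/-- one step transition operator -/
def stepOp (ν : Measure ℝ) (f : ℝ → ENNReal) : ℝ → ENNReal := fun y => ∫⁻ u, f (y + u) ∂ν

theorem measurable_stepOp (ν : Measure ℝ) [SFinite ν] (f : ℝ → ENNReal) (hf : Measurable f) :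
    Measurable (stepOp ν f) := by
  have : Measurable (fun z : ℝ × ℝ => f (z.1 + z.2)) := hf.comp (measurable_fst.add measurable_snd)
  exact this.lintegral_prod_right'

theorem stepOp_bounds (ν : Measure ℝ) [IsProbabilityMeasure ν] (x b : ℝ) (hb : 0 ≤ b)
    (t S : ENNReal) (ht : ν (Ioi b) ≤ t) (hS : ν (Ioi (x / 2)) ≤ S) (k : ℕ) :
    (∀ y, (stepOp ν)^[k] ((Ioi x).indicator 1) y ≤ 1) ∧
    (∀ y, y + k * b ≤ x → (stepOp ν)^[k] ((Ioi x).indicator 1) y ≤ k * t) ∧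
    (∀ y, y + k * b ≤ x / 2 → 0 ≤ x → (stepOp ν)^[k] ((Ioi x).indicator 1) y ≤
      k * S + k ^ 2 * t ^ 2) := by
  induction k with
  | zero =>
    refine ⟨fun y => ?_, fun y hy => ?_, fun y hy hx => ?_⟩
    · simp only [Function.iterate_zero, id]
      exact Set.indicator_le_self' (by simp) y
    · simp only [Function.iterate_zero, id]
      rw [Set.indicator_of_notMem]
      · simp
      · simpa using hy
    · simp only [Function.iterate_zero, id]
      rw [Set.indicator_of_notMem]
      · simp
      · simp at hy ⊢; linarith
  | succ k ih =>
    obtain ⟨i1, i2, i3⟩ := ih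
    rw [Function.iterate_succ']
    set g := (stepOp ν)^[k] ((Ioi x).indicator 1) with hg
    simp only [Function.comp_apply]
    refine ⟨fun y => ?_, fun y hy => ?_, fun y hy hx => ?_⟩
    · calc stepOp ν g y ≤ ∫⁻ _, 1 ∂ν := lintegral_mono fun u => i1 _
        _ = 1 := by simp
    · push_cast at hy
      calc stepOp ν g y ≤ ∫⁻ u, (k * t + (Ioi b).indicator 1 u) ∂ν := by
            refine lintegral_mono fun u => ?_
            by_cases hu : u ≤ b
            · refine (i2 (y + u) (by linarith)).trans le_self_add
            · rw [Set.indicator_of_mem (by simpa using hu)]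
              exact (i1 _).trans le_add_self
        _ = k * t + ν (Ioi b) := by
            rw [lintegral_add_left measurable_const, lintegral_indicator_one measurableSet_Ioi]
            simp
        _ ≤ k * t + t := by gcongr
        _ = _ := by push_cast; ring
    · push_cast at hy
      calc stepOp ν g y ≤ ∫⁻ u, ((k * S + k^2 * t^2) + ((k * t) * (Ioi b).indicator 1 u +
              (Ioi (x/2)).indicator 1 u)) ∂ν := by
            refine lintegral_mono fun u => ?_
            by_cases hu : u ≤ b
            · refine (i3 (y + u) (by linarith) hx).trans le_self_add
            · refine le_trans ?_ le_add_self
              by_cases hu' : u ≤ x / 2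
              · refine le_trans ?_ le_self_add
                rw [Set.indicator_of_mem (by simpa using hu)]
                simpa using i2 (y + u) (by linarith)
              · refine le_trans ?_ le_add_self
                rw [Set.indicator_of_mem (by simpa using hu')]
                exact (i1 _)
        _ = (k * S + k^2 * t^2) + ((k * t) * ν (Ioi b) + ν (Ioi (x/2))) := by
            rw [lintegral_add_left measurable_const, lintegral_const, lintegral_add_right, lintegral_const_mul,
              lintegral_indicator_one measurableSet_Ioi, lintegral_indicator_one measurableSet_Ioi]
            · simp
            · exact measurable_one.indicator measurableSet_Ioi
            · exact measurable_one.indicator measurableSet_Ioi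
        _ ≤ (k * S + k^2 * t^2) + ((k * t) * t + S) := by gcongr
        _ ≤ (k * S + k^2 * t^2) + ((k * t) * t + S) + (k * t * t + t * t) := le_self_add
        _ = _ := by push_cast; ring

theorem indep_blocks {Ω ι : Type*} [MeasurableSpace Ω] (P : Measure Ω) [IsProbabilityMeasure P]
    (Z : ι → Ω → ℝ) (hZ : ∀ i, Measurable (Z i)) (hind : iIndepFun Z P) (S T : Set ι)
    (hST : Disjoint S T) :
    Indep (⨆ i ∈ S, MeasurableSpace.comap (Z i) inferInstance)
      (⨆ i ∈ T, MeasurableSpace.comap (Z i) inferInstance) P :=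
  indep_iSup_of_disjoint (fun i => (hZ i).comap_le) hind hST

theorem indepFun_brw {Ω : Type*} [MeasurableSpace Ω] (P : Measure Ω) [IsProbabilityMeasure P]
    (N : ℕ) (Y : ℕ → Fin N → Fin 2 → Ω → ℝ) (hY : ∀ n i j, Measurable (Y n i j))
    (hind : iIndepFun (fun p : ℕ × Fin N × Fin 2 => Y p.1 p.2.1 p.2.2) P) (a k : ℕ) (i i' : Fin N)
    (j : Fin 2) :
    IndepFun (fun ω => brw N (fun _ => 0) (fun l i j => Y (a + l) i j ω) k i) (Y (a + k) i' j) P := by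
  rw [IndepFun_iff_Indep]
  refine indep_of_indep_of_le_left (indep_of_indep_of_le_right
    (indep_blocks P _ (fun p => hY _ _ _) hind {q | q.1 < a + k} {q | q.1 = a + k} ?_) ?_) ?_
  · rw [Set.disjoint_left]
    intro q h1 h2
    simp at h1 h2; omega
  · exact le_iSup₂_of_le (a + k, i', j) (by simp) le_rfl
  · refine Measurable.comap_le ?_
    refine measurable_brw _ N (fun l i j => Y (a + l) i j) k ?_ i
    intro l hl i j
    refine Measurable.mono (comap_measurable (Y (a + l) i j)) ?_ le_rfl
    exact le_iSup₂_of_le (f := fun (p : ℕ × Fin N × Fin 2) (_ : p ∈ {q : ℕ × Fin N × Fin 2 | q.1 < a + k}) =>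
      MeasurableSpace.comap (Y p.1 p.2.1 p.2.2) inferInstance) (a + l, i, j) (by simpa using hl) le_rfl

theorem lintegral_brw {Ω : Type*} [MeasurableSpace Ω] (P : Measure Ω) [IsProbabilityMeasure P]
    (N : ℕ) (Y : ℕ → Fin N → Fin 2 → Ω → ℝ) (hY : ∀ n i j, Measurable (Y n i j))
    (hind : iIndepFun (fun p : ℕ × Fin N × Fin 2 => Y p.1 p.2.1 p.2.2) P)
    (ν : Measure ℝ) [IsProbabilityMeasure ν] (hν : ∀ n i j, Measure.map (Y n i j) P = ν)
    (a k : ℕ) (f : ℝ → ENNReal) (hf : Measurable f) :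
    ∑ i, ∫⁻ ω, f (brw N (fun _ => 0) (fun l i j => Y (a + l) i j ω) k i) ∂P ≤
      N * 2 ^ k * (stepOp ν)^[k] f 0 := by
  have hbm : ∀ k i, Measurable fun ω => brw N (fun _ => 0) (fun l i j => Y (a + l) i j ω) k i :=
    fun k i => measurable_brw _ N (fun l i j => Y (a + l) i j) k (fun l _ i j => hY _ _ _) i
  induction k generalizing f with
  | zero => simp [brw]
  | succ k ih =>
    calc ∑ i, ∫⁻ ω, f (brw N (fun _ => 0) (fun l i j => Y (a + l) i j ω) (k+1) i) ∂P
        = ∫⁻ ω, ∑ i, f (brw N (fun _ => 0) (fun l i j => Y (a + l) i j ω) (k+1) i) ∂P := by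
          rw [lintegral_finsetSum]
          exact fun i _ => hf.comp (hbm _ _)
      _ ≤ ∫⁻ ω, ∑ p : Fin N × Fin 2, f (brw N (fun _ => 0) (fun l i j => Y (a + l) i j ω) k p.1 +
            Y (a + k) p.1 p.2 ω) ∂P :=
          lintegral_mono fun ω => sum_brwStep_le N _ (fun i j => Y (a + k) i j ω) f
      _ = ∑ p : Fin N × Fin 2, ∫⁻ ω, f (brw N (fun _ => 0) (fun l i j => Y (a + l) i j ω) k p.1 +
            Y (a + k) p.1 p.2 ω) ∂P := by
          rw [lintegral_finsetSum]
          exact fun p _ => hf.comp ((hbm _ _).add (hY _ _ _))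
      _ = ∑ p : Fin N × Fin 2, ∫⁻ ω, stepOp ν f
            (brw N (fun _ => 0) (fun l i j => Y (a + l) i j ω) k p.1) ∂P := by
          refine Finset.sum_congr rfl fun p _ => ?_
          have hi := indepFun_brw P N Y hY hind a k p.1 p.1 p.2
          rw [indepFun_iff_map_prod_eq_prod_map_map (hbm _ _).aemeasurable
            (hY _ _ _).aemeasurable, hν] at hi
          have hm : Measurable (fun z : ℝ × ℝ => f (z.1 + z.2)) :=
            hf.comp (measurable_fst.add measurable_snd)
          have e1 := lintegral_map (μ := P) hm ((hbm k p.1).prodMk (hY (a + k) p.1 p.2))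
          rw [hi, lintegral_prod _ hm.aemeasurable] at e1
          rw [← e1, ← lintegral_map (f := stepOp ν f) (measurable_stepOp ν f hf) (hbm k p.1)]
          rfl
      _ = 2 * ∑ i, ∫⁻ ω, stepOp ν f
            (brw N (fun _ => 0) (fun l i j => Y (a + l) i j ω) k i) ∂P := by
          rw [Fintype.sum_prod_type, Finset.mul_sum]
          simp
      _ ≤ 2 * (N * 2 ^ k * (stepOp ν)^[k] (stepOp ν f) 0) := by
          gcongr
          exact ih _ (measurable_stepOp ν f hf)
      _ = _ := by rw [Function.iterate_succ_apply]; ring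

theorem meas_domW {Ω : Type*} [MeasurableSpace Ω] (P : Measure Ω) [IsProbabilityMeasure P]
    (N m : ℕ) (hN : 0 < N) (Y : ℕ → Fin N → Fin 2 → Ω → ℝ) (hY : ∀ n i j, Measurable (Y n i j))
    (hind : iIndepFun (fun p : ℕ × Fin N × Fin 2 => Y p.1 p.2.1 p.2.2) P)
    (ν : Measure ℝ) [IsProbabilityMeasure ν] (hν : ∀ n i j, Measure.map (Y n i j) P = ν)
    (n : ℕ) (x : ℝ) (hx : 0 < x) :
    P {ω | x < domW N m (fun k i j => Y k i j ω) n} ≤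
      2 * ν (Ioi x) * (N * 2 ^ m * (m * ν (Ioi (x/2)) + m ^ 2 * ν (Ioi (x / (2 * m))) ^ 2)) := by
  have : Nonempty (Fin N) := ⟨⟨0, hN⟩⟩
  set a := n - m with ha
  set s := n - a with hs
  have hn : a + s = n := by omega
  have hsm : s ≤ m := by omega
  have hbm : ∀ k i, Measurable fun ω => brw N (fun _ => 0) (fun l i j => Y (a + l) i j ω) k i :=
    fun k i => measurable_brw _ N (fun l i j => Y (a + l) i j) k (fun l _ i j => hY _ _ _) i
  have hfm : Measurable ((Ioi x).indicator (1 : ℝ → ENNReal)) :=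
    measurable_one.indicator measurableSet_Ioi
  calc P {ω | x < domW N m (fun k i j => Y k i j ω) n}
      ≤ P (⋃ p : Fin N × Fin 2, (Y n p.1 p.2 ⁻¹' Ioi x) ∩
          ((fun ω => brw N (fun _ => 0) (fun l i j => Y (a + l) i j ω) s p.1) ⁻¹' Ioi x)) := by
        refine measure_mono fun ω hω => ?_
        rw [mem_ofPred_eq, domW] at hω
        obtain ⟨p, hp⟩ := exists_lt_of_lt_ciSup hω
        rw [lt_min_iff] at hp
        exact mem_iUnion.2 ⟨p, hp⟩
    _ ≤ ∑ p : Fin N × Fin 2, P ((Y n p.1 p.2 ⁻¹' Ioi x) ∩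
          ((fun ω => brw N (fun _ => 0) (fun l i j => Y (a + l) i j ω) s p.1) ⁻¹' Ioi x)) :=
        measure_iUnion_fintype_le _ _
    _ = ∑ p : Fin N × Fin 2, ν (Ioi x) * ∫⁻ ω, (Ioi x).indicator 1
          (brw N (fun _ => 0) (fun l i j => Y (a + l) i j ω) s p.1) ∂P := by
        refine Finset.sum_congr rfl fun p _ => ?_
        have hi := (indepFun_brw P N Y hY hind a s p.1 p.1 p.2).symm
        rw [hn] at hi
        rw [hi.measure_inter_preimage_eq_mul _ _ measurableSet_Ioi measurableSet_Ioi,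
          ← hν n p.1 p.2, Measure.map_apply (hY _ _ _) measurableSet_Ioi,
          ← lintegral_map (f := (Ioi x).indicator 1) hfm (hbm s p.1),
          lintegral_indicator_one measurableSet_Ioi, Measure.map_apply (hbm _ _) measurableSet_Ioi]
    _ = 2 * ν (Ioi x) * ∑ i, ∫⁻ ω, (Ioi x).indicator 1
          (brw N (fun _ => 0) (fun l i j => Y (a + l) i j ω) s i) ∂P := by
        rw [Fintype.sum_prod_type, Finset.mul_sum]
        simp [mul_assoc]
    _ ≤ 2 * ν (Ioi x) * (N * 2 ^ s * (stepOp ν)^[s] ((Ioi x).indicator 1) 0) := by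
        gcongr
        exact lintegral_brw P N Y hY hind ν hν a s _ hfm
    _ ≤ 2 * ν (Ioi x) * (N * 2 ^ m * (s * ν (Ioi (x/2)) + s ^ 2 * ν (Ioi (x / (2 * m))) ^ 2)) := by
        gcongr
        · norm_num
        · refine (stepOp_bounds ν x (x / (2 * m)) (by positivity) _ _ le_rfl le_rfl s).2.2 0 ?_ hx.le
          rcases Nat.eq_zero_or_pos m with h0 | h0
          · have : s = 0 := by omega
            rw [this]; simp; linarith
          · have h1 : (s:ℝ) ≤ m := by exact_mod_cast hsm
            have h2 : (0:ℝ) < m := by exact_mod_cast h0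
            rw [zero_add, ← mul_div_assoc, div_le_div_iff₀ (by positivity) (by norm_num)]
            nlinarith
    _ ≤ _ := by gcongr

theorem potter (tl : ℝ → ℝ) (anti : Antitone tl) (nn : ∀ x, 0 ≤ tl x) (α η : ℝ) (hη : 0 < η)
    (hηα : η < α)
    (hRV : ∀ l : ℝ, 0 < l → Tendsto (fun x => tl x / tl (l * x)) atTop (nhds (l ^ α))) :
    ∃ x0 : ℝ, 0 < x0 ∧ (∀ x, 0 < tl x) ∧ ∀ x y, x0 ≤ x → x0 ≤ y →
      tl y ≤ 2 ^ (α + η) * tl x * max ((x / y) ^ (α + η)) ((x / y) ^ (α - η)) := by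
  have h2 := hRV 2 (by norm_num)
  have e1 : ∀ᶠ x in atTop, (2:ℝ) ^ (α - η) < tl x / tl (2 * x) :=
    h2.eventually (lt_mem_nhds (Real.rpow_lt_rpow_of_exponent_lt (by norm_num) (by linarith)))
  have e2 : ∀ᶠ x in atTop, tl x / tl (2 * x) < (2:ℝ) ^ (α + η) :=
    h2.eventually (gt_mem_nhds (Real.rpow_lt_rpow_of_exponent_lt (by norm_num) (by linarith)))
  obtain ⟨x1, hx1⟩ := eventually_atTop.1 (e1.and e2)
  have hpos1 : ∀ x, x1 ≤ x → 0 < tl (2 * x) := by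
    intro x hx
    have h := (hx1 x hx).1
    rcases (nn (2 * x)).eq_or_lt with h0 | h0
    · rw [← h0, div_zero] at h
      exact absurd h (not_lt.2 (by positivity))
    · exact h0
  have hpos : ∀ x, 0 < tl x := by
    intro x
    have := hpos1 (max x1 (max x 0)) (le_max_left _ _)
    refine this.trans_le (anti ?_)
    have h1 : max x 0 ≤ max x1 (max x 0) := le_max_right _ _
    have h2 : x ≤ max x 0 := le_max_left _ _
    have h3 : 0 ≤ max x 0 := le_max_right _ _
    linarith
  have up : ∀ (k : ℕ) x, max x1 1 ≤ x → tl x ≤ ((2:ℝ) ^ k) ^ (α + η) * tl (2 ^ k * x) := by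
    intro k
    induction k with
    | zero => intro x _; simp
    | succ k ih =>
      intro x hx
      have hx' : x1 ≤ x := (le_max_left _ _).trans hx
      have hx'' : 1 ≤ x := (le_max_right _ _).trans hx
      have h := (hx1 x hx').2
      rw [div_lt_iff₀ (hpos _)] at h
      have := ih (2 * x) (by linarith)
      calc tl x ≤ 2 ^ (α + η) * tl (2 * x) := h.le
        _ ≤ 2 ^ (α + η) * (((2:ℝ) ^ k) ^ (α + η) * tl (2 ^ k * (2 * x))) := by gcongr
        _ = _ := by
          rw [← mul_assoc, ← Real.mul_rpow (by norm_num) (by positivity)]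
          congr 2 <;> ring
  have dn : ∀ (k : ℕ) x, max x1 1 ≤ x → ((2:ℝ) ^ k) ^ (α - η) * tl (2 ^ k * x) ≤ tl x := by
    intro k
    induction k with
    | zero => intro x _; simp
    | succ k ih =>
      intro x hx
      have hx' : x1 ≤ x := (le_max_left _ _).trans hx
      have hx'' : 1 ≤ x := (le_max_right _ _).trans hx
      have h := (hx1 x hx').1
      rw [lt_div_iff₀ (hpos _)] at h
      have := ih (2 * x) (by linarith)
      calc ((2:ℝ) ^ (k+1)) ^ (α - η) * tl (2 ^ (k+1) * x)
          = 2 ^ (α - η) * (((2:ℝ) ^ k) ^ (α - η) * tl (2 ^ k * (2 * x))) := by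
            rw [← mul_assoc, ← Real.mul_rpow (by norm_num) (by positivity)]
            congr 2 <;> ring
        _ ≤ 2 ^ (α - η) * tl (2 * x) := by gcongr
        _ ≤ _ := h.le
  refine ⟨max x1 1, by positivity, hpos, ?_⟩
  intro x y hx hy
  have hx'' : 0 < x := lt_of_lt_of_le one_pos ((le_max_right _ _).trans hx)
  have hy'' : 0 < y := lt_of_lt_of_le one_pos ((le_max_right _ _).trans hy)
  rcases le_total x y with hxy | hxy
  · obtain ⟨k, hk1, hk2⟩ := exists_nat_pow_near (x := y / x) (y := 2) (by rwa [one_le_div hx''])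
      (by norm_num)
    have d := dn k x hx
    rw [le_div_iff₀ hx''] at hk1
    have h1 : tl y ≤ tl (2 ^ k * x) := anti hk1
    have hxy' : 1 < (2 * 2 ^ k) * (x / y) := by
      rw [div_lt_iff₀ hx''] at hk2
      rw [← mul_div_assoc, one_lt_div hy'']
      calc y < 2 ^ (k+1) * x := hk2
        _ = _ := by ring
    have h3 : 1 ≤ 2 ^ (α + η) * (((2:ℝ)^k) ^ (α - η) * (x / y) ^ (α - η)) := by
      calc (1:ℝ) ≤ ((2 * 2 ^ k) * (x / y)) ^ (α - η) :=
            Real.one_le_rpow hxy'.le (by linarith)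
        _ = 2 ^ (α - η) * (((2:ℝ)^k) ^ (α - η) * (x / y) ^ (α - η)) := by
            rw [Real.mul_rpow (by positivity) (by positivity),
              Real.mul_rpow (by positivity) (by positivity)]; ring
        _ ≤ _ := by
            gcongr
            · norm_num
            · linarith
    calc tl y ≤ tl (2 ^ k * x) := h1
      _ ≤ tl (2 ^ k * x) * (2 ^ (α + η) * (((2:ℝ)^k) ^ (α - η) * (x / y) ^ (α - η))) :=
          le_mul_of_one_le_right (nn _) h3
      _ = 2 ^ (α + η) * (((2:ℝ)^k) ^ (α - η) * tl (2 ^ k * x)) * (x / y) ^ (α - η) := by ring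
      _ ≤ 2 ^ (α + η) * tl x * (x / y) ^ (α - η) := by gcongr
      _ ≤ _ := by
        gcongr
        · exact mul_nonneg (by positivity) (nn _)
        · exact le_max_right _ _
  · obtain ⟨k, hk1, hk2⟩ := exists_nat_pow_near (x := x / y) (y := 2) (by rwa [one_le_div hy''])
      (by norm_num)
    have d := up (k+1) y hy
    rw [div_lt_iff₀ hy''] at hk2
    have h1 : tl (2 ^ (k+1) * y) ≤ tl x := anti hk2.le
    calc tl y ≤ ((2:ℝ) ^ (k+1)) ^ (α + η) * tl (2 ^ (k+1) * y) := d
      _ ≤ (2 * (x / y)) ^ (α + η) * tl x := by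
        gcongr
        · exact nn _
        · linarith
        · rw [pow_succ']; linarith
      _ = 2 ^ (α + η) * tl x * (x / y) ^ (α + η) := by
        rw [Real.mul_rpow (by positivity) (by positivity)]; ring
      _ ≤ _ := by
        gcongr
        · exact mul_nonneg (by positivity) (nn _)
        · exact le_max_left _ _

theorem max_rpow_mul_le (l u a b : ℝ) (hl : 1 ≤ l) (hu : 0 < u) (hab : b ≤ a) :
    max ((l * u) ^ a) ((l * u) ^ b) ≤ l ^ a * max (u ^ a) (u ^ b) := by
  have hl0 : 0 < l := by linarith
  rw [Real.mul_rpow hl0.le hu.le, Real.mul_rpow hl0.le hu.le]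
  refine max_le ?_ ?_
  · gcongr
    exact le_max_left _ _
  · gcongr
    exact le_max_right _ _

theorem numeric (tl : ℝ → ℝ) (nn : ∀ x, 0 ≤ tl x) (α p ε a b q C x0 c N L δ r : ℝ) (m : ℕ)
    (hα : 0 < α) (hp0 : 0 ≤ p) (hp : p < 2 * α) (hε0 : 0 < ε) (hε : ε ≤ (2 * α - p) / 2)
    (ha : a = α + ε / 4) (hb : b = α - ε / 4) (hq : q = α + p / 2) (hC : 0 < C)
    (hx0 : 0 < x0)
    (hpot : ∀ x y, x0 ≤ x → x0 ≤ y → tl y ≤ C * tl x * max ((x / y) ^ a) ((x / y) ^ b))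
    (hpos : ∀ x, 0 < tl x)
    (hN : 1 ≤ N) (hL : 1 ≤ L) (hδ0 : 0 < δ) (hδ1 : δ ≤ 1) (hm1 : 1 ≤ m) (hmL : (m : ℝ) ≤ L)
    (h2m : (2:ℝ) ^ m = N * δ) (hr : r = (δ / L) ^ (1 / (2 * α + ε)))
    (hDr : C ^ 2 * 2 ^ a * r ^ (ε / 2) ≤ 1)
    (hK : C * 4 ^ a * L ^ (2 * a + 1) ≤ 2 * 2 ^ a * (δ * N))
    (hK2 : C * 2 ^ a * L ^ a ≤ 2 * tl x0 * (δ * N))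
    (hc : x0 ≤ c) (htail : tl c ≤ (2 * N * L)⁻¹) (x : ℝ) (hx : r ≤ x) :
    2 * tl (c * x) * (N * 2 ^ m * (m * tl (c * (x / 2)) + m ^ 2 * tl (c * (x / (2 * m))) ^ 2)) ≤
      (r / x) ^ q := by
  have hm0 : (1:ℝ) ≤ m := by exact_mod_cast hm1
  have hdL : 0 < δ / L := by positivity
  have hdL1 : δ / L ≤ 1 := by rw [div_le_one (by linarith)]; linarith
  have hr0 : 0 < r := by rw [hr]; positivity
  have hr1 : r ≤ 1 := by rw [hr]; exact Real.rpow_le_one hdL.le hdL1 (by positivity)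
  have hrp : r ^ (2 * α + ε) = δ / L := by
    rw [hr, ← Real.rpow_mul hdL.le, one_div, inv_mul_cancel₀ (by positivity), Real.rpow_one]
  have ha0 : 0 < a := by linarith
  have hb0 : 0 < b := by linarith
  have hab : b ≤ a := by linarith
  have hc0 : 0 < c := by linarith
  have hx00 : 0 < x := by linarith
  have hrinv : r ^ (-a) ≤ L / δ := by
    calc r ^ (-a) ≤ r ^ (-(2 * α + ε)) :=
          Real.rpow_le_rpow_of_exponent_ge hr0 hr1 (by linarith)
      _ = L / δ := by rw [Real.rpow_neg hr0.le, hrp, inv_div]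
  -- c is large
  have hcr : x0 ≤ c * (r / (2 * m)) := by
    have h1 := hpot c x0 hc le_rfl
    have hcx : 1 ≤ c / x0 := by rwa [one_le_div hx0]
    rw [max_eq_left (Real.rpow_le_rpow_of_exponent_le hcx hab)] at h1
    have h2 : tl x0 * (2 * N * L) ≤ C * (c / x0) ^ a := by
      have : tl x0 ≤ C * (2 * N * L)⁻¹ * (c / x0) ^ a := h1.trans (by gcongr)
      calc tl x0 * (2 * N * L) ≤ (C * (2 * N * L)⁻¹ * (c / x0) ^ a) * (2 * N * L) := by gcongr
        _ = _ := by field_simp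
    have h3 : C * (2 * m / r) ^ a ≤ tl x0 * (2 * N * L) := by
      calc C * (2 * m / r) ^ a ≤ C * (2 * L / r) ^ a := by gcongr
        _ = C * 2 ^ a * L ^ a * r ^ (-a) := by
          rw [Real.div_rpow (by positivity) hr0.le, Real.mul_rpow (by norm_num) (by positivity),
            Real.rpow_neg hr0.le]; ring
        _ ≤ (2 * tl x0 * (δ * N)) * (L / δ) := by
          have := hpos x0
          gcongr
        _ = _ := by field_simp
    have h4 : (2 * m / r) ^ a ≤ (c / x0) ^ a := by
      have := h3.trans h2
      exact le_of_mul_le_mul_left this hC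
    rw [Real.rpow_le_rpow_iff (by positivity) (by positivity) ha0] at h4
    rw [div_le_div_iff₀ hr0 hx0] at h4
    rw [← mul_div_assoc, le_div_iff₀ (by positivity)]
    linarith
  set A := (2 * N * L)⁻¹ with hA
  have hA0 : 0 < A := by positivity
  set M := max (x⁻¹ ^ a) (x⁻¹ ^ b) with hM
  have hM0 : 0 < M := lt_max_of_lt_left (by positivity)
  have key : ∀ l : ℝ, 1 ≤ l → l ≤ 2 * m → tl (c * (x / l)) ≤ C * A * (l ^ a * M) := by
    intro l hl hlm
    have hl0 : 0 < l := by linarith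
    have hy : x0 ≤ c * (x / l) := hcr.trans (by gcongr)
    have h1 := hpot c (c * (x / l)) hc hy
    have e : c / (c * (x / l)) = l * x⁻¹ := by field_simp
    rw [e] at h1
    calc _ ≤ _ := h1
      _ ≤ C * A * (l ^ a * M) := by
        gcongr
        exact max_rpow_mul_le l x⁻¹ a b hl (by positivity) hab
  have k1 : tl (c * x) ≤ C * A * M := by
    have := key 1 le_rfl (by linarith)
    simpa using this
  have k2 := key 2 (by norm_num) (by linarith)
  have k3 : tl (c * (x / (2 * m))) ≤ C * A * ((2 * L) ^ a * M) :=
    (key (2 * m) (by linarith) le_rfl).trans (by gcongr)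
  have hMr : M ≤ r ^ (-a) := by
    have hxr : x⁻¹ ≤ r⁻¹ := by gcongr
    have hri : 1 ≤ r⁻¹ := (one_le_inv₀ hr0).2 hr1
    rw [Real.rpow_neg hr0.le, ← Real.inv_rpow hr0.le]
    refine max_le (by gcongr) ?_
    calc x⁻¹ ^ b ≤ r⁻¹ ^ b := by gcongr
      _ ≤ r⁻¹ ^ a := Real.rpow_le_rpow_of_exponent_le hri hab
  have hML : M ≤ L / δ := hMr.trans hrinv
  have step1 : 2 * tl (c * x) * (N * 2 ^ m * (m * tl (c * (x / 2)) +
      m ^ 2 * tl (c * (x / (2 * m))) ^ 2)) ≤ C ^ 2 * 2 ^ a * (δ / L) * M ^ 2 := by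
    calc _ ≤ 2 * (C * A * M) * (N * (N * δ) * (L * (C * A * (2 ^ a * M)) +
              L ^ 2 * (C * A * ((2 * L) ^ a * M)) ^ 2)) := by
          rw [h2m]
          have n1 := nn (c * x)
          have n2 := nn (c * (x / 2))
          have n3 := nn (c * (x / (2 * m)))
          gcongr
      _ = C ^ 2 / 2 * (δ / L) * M ^ 2 * (2 ^ a + C * ((2 * L) ^ a) ^ 2 / (2 * N) * M) := by
          rw [hA]; field_simp
      _ ≤ C ^ 2 / 2 * (δ / L) * M ^ 2 * (2 ^ a + 2 ^ a) := by
          gcongr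
          calc C * ((2 * L) ^ a) ^ 2 / (2 * N) * M ≤ C * ((2 * L) ^ a) ^ 2 / (2 * N) * (L / δ) := by
                gcongr
            _ = (C * 4 ^ a * L ^ (2 * a + 1)) / (2 * (δ * N)) := by
                rw [Real.mul_rpow (by norm_num) (by positivity), mul_pow,
                  show (4:ℝ) = 2 ^ (2:ℕ) by norm_num, ← Real.rpow_natCast 2 2,
                  ← Real.rpow_mul (by norm_num), Real.rpow_add (by positivity), Real.rpow_one,
                  ← Real.rpow_natCast (2 ^ a) 2, ← Real.rpow_natCast (L ^ a) 2,
                  ← Real.rpow_mul (by norm_num), ← Real.rpow_mul (by positivity),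
                  mul_comm a]
                push_cast
                field_simp
            _ ≤ 2 ^ a := by
                rw [div_le_iff₀ (by positivity)]
                linarith
      _ = _ := by ring
  refine step1.trans ?_
  rw [← hrp]
  have hu : 0 < x⁻¹ := by positivity
  rw [div_eq_mul_inv, Real.mul_rpow hr0.le hu.le]
  have main : r ^ (2 * α + ε) * M ^ 2 ≤ r ^ (ε / 2) * (r ^ q * x⁻¹ ^ q) := by
    rcases le_total 1 x⁻¹ with h1 | h1
    · have : M = x⁻¹ ^ a := max_eq_left (Real.rpow_le_rpow_of_exponent_le h1 hab)
      rw [this, ← Real.rpow_natCast, ← Real.rpow_mul hu.le]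
      push_cast
      have hxr : x⁻¹ ≤ r⁻¹ := by gcongr
      calc r ^ (2 * α + ε) * x⁻¹ ^ (a * 2) = r ^ (2 * α + ε) * (x⁻¹ ^ (a * 2 - q) * x⁻¹ ^ q) := by
            rw [← Real.rpow_add hu]; congr 2; ring
        _ ≤ r ^ (2 * α + ε) * (r⁻¹ ^ (a * 2 - q) * x⁻¹ ^ q) := by
            gcongr
            linarith
        _ = r ^ (ε / 2) * (r ^ q * x⁻¹ ^ q) := by
            rw [Real.inv_rpow hr0.le, ← Real.rpow_neg hr0.le, ← mul_assoc, ← mul_assoc,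
              ← Real.rpow_add hr0, ← Real.rpow_add hr0]
            congr 2; rw [ha]; ring
    · have : M = x⁻¹ ^ b := max_eq_right (Real.rpow_le_rpow_of_exponent_ge hu h1 hab)
      rw [this, ← Real.rpow_natCast, ← Real.rpow_mul hu.le, ← mul_assoc, ← Real.rpow_add hr0]
      push_cast
      gcongr ?_ * ?_
      · exact Real.rpow_le_rpow_of_exponent_ge hr0 hr1 (by linarith)
      · exact Real.rpow_le_rpow_of_exponent_ge hu h1 (by linarith)
  calc C ^ 2 * 2 ^ a * r ^ (2 * α + ε) * M ^ 2 = C ^ 2 * 2 ^ a * (r ^ (2 * α + ε) * M ^ 2) := by ring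
    _ ≤ C ^ 2 * 2 ^ a * (r ^ (ε / 2) * (r ^ q * x⁻¹ ^ q)) := by gcongr
    _ = (C ^ 2 * 2 ^ a * r ^ (ε / 2)) * (r ^ q * x⁻¹ ^ q) := by ring
    _ ≤ 1 * (r ^ q * x⁻¹ ^ q) := by gcongr
    _ = _ := one_mul _

theorem moment {Ω : Type*} [MeasurableSpace Ω] (P : Measure Ω) [IsProbabilityMeasure P]
    (W : Ω → ℝ) (hW : Measurable W) (hW0 : ∀ ω, 0 ≤ W ω) (r p q : ℝ) (hr : 0 < r) (hp : 0 < p)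
    (hpq : p < q) (h : ∀ x, r ≤ x → P {ω | x < W ω} ≤ ENNReal.ofReal ((r / x) ^ q)) :
    ∫⁻ ω, ENNReal.ofReal (W ω ^ p) ∂P ≤ ENNReal.ofReal ((1 + p / (q - p)) * r ^ p) := by
  rw [lintegral_rpow_eq_lintegral_meas_lt_mul P (ae_of_all _ hW0) hW.aemeasurable hp]
  have hqp : 0 < q - p := by linarith
  rw [← Ioc_union_Ioi_eq_Ioi hr.le, lintegral_union measurableSet_Ioi
    (by rw [Set.disjoint_left]; intro x h1 h2; exact absurd h1.2 (not_le.2 h2))]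
  have i1 : ∫⁻ t in Ioc 0 r, P {a | t < W a} * ENNReal.ofReal (t ^ (p - 1)) ≤
      ENNReal.ofReal (r ^ p / p) := by
    have hint : IntegrableOn (fun t : ℝ => t ^ (p - 1)) (Ioc 0 r) := by
      rw [← intervalIntegrable_iff_integrableOn_Ioc_of_le hr.le]
      exact intervalIntegral.intervalIntegrable_rpow' (by linarith)
    calc _ ≤ ∫⁻ t in Ioc 0 r, ENNReal.ofReal (t ^ (p - 1)) := by
          refine lintegral_mono fun t => ?_
          exact (mul_le_mul_left prob_le_one _).trans (by simp)
      _ = ENNReal.ofReal (∫ t in Ioc 0 r, t ^ (p - 1)) := by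
          rw [ofReal_integral_eq_lintegral_ofReal hint]
          filter_upwards [ae_restrict_mem measurableSet_Ioc] with t ht
          exact Real.rpow_nonneg ht.1.le _
      _ = ENNReal.ofReal (r ^ p / p) := by
          rw [← intervalIntegral.integral_of_le hr.le, integral_rpow (Or.inl (by linarith))]
          simp [Real.zero_rpow hp.ne']
      _ ≤ _ := le_rfl
  have i2 : ∫⁻ t in Ioi r, P {a | t < W a} * ENNReal.ofReal (t ^ (p - 1)) ≤
      ENNReal.ofReal (r ^ p / (q - p)) := by
    have hint : IntegrableOn (fun t : ℝ => r ^ q * t ^ (p - 1 - q)) (Ioi r) :=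
      (integrableOn_Ioi_rpow_of_lt (by linarith) hr).const_mul _
    calc _ ≤ ∫⁻ t in Ioi r, ENNReal.ofReal (r ^ q * t ^ (p - 1 - q)) := by
          refine setLIntegral_mono' measurableSet_Ioi fun t ht => ?_
          have ht0 : 0 < t := hr.trans ht
          calc _ ≤ ENNReal.ofReal ((r / t) ^ q) * ENNReal.ofReal (t ^ (p - 1)) := by
                gcongr
                exact h t (le_of_lt ht)
            _ = _ := by
                rw [← ENNReal.ofReal_mul (by positivity), Real.div_rpow hr.le ht0.le,
                  Real.rpow_sub ht0 (p - 1) q]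
                congr 1
                ring
      _ = ENNReal.ofReal (∫ t in Ioi r, r ^ q * t ^ (p - 1 - q)) := by
          rw [ofReal_integral_eq_lintegral_ofReal hint]
          filter_upwards [ae_restrict_mem measurableSet_Ioi] with t ht
          have ht0 : 0 < t := hr.trans ht
          positivity
      _ = ENNReal.ofReal (r ^ p / (q - p)) := by
          rw [integral_const_mul, integral_Ioi_rpow_of_lt (by linarith) hr]
          congr 1
          rw [show p - 1 - q + 1 = p - q by ring, Real.rpow_sub hr]
          have : p - q ≠ 0 := by linarith
          field_simp
          ring
  calc _ ≤ ENNReal.ofReal p * (ENNReal.ofReal (r ^ p / p) + ENNReal.ofReal (r ^ p / (q - p))) := by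
        gcongr
    _ = _ := by
        rw [← ENNReal.ofReal_add (by positivity) (by positivity), ← ENNReal.ofReal_mul hp.le]
        congr 1
        field_simp

theorem tail_antitone {Ω : Type*} [MeasurableSpace Ω] (P : Measure Ω) [IsProbabilityMeasure P]
    (X : Ω → ℝ) : Antitone (tail P X) := by
  intro x y hxy
  refine ENNReal.toReal_mono (measure_ne_top _ _) (measure_mono fun ω hω => ?_)
  exact lt_of_le_of_lt hxy hω

theorem tail_eq_cdf {Ω : Type*} [MeasurableSpace Ω] (P : Measure Ω) [IsProbabilityMeasure P]
    (X : Ω → ℝ) (hX : Measurable X) (x : ℝ) : tail P X x = 1 - cdf (P.map X) x := by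
  have : IsProbabilityMeasure (P.map X) := Measure.isProbabilityMeasure_map hX.aemeasurable
  rw [cdf_eq_real, ← probReal_compl_eq_one_sub measurableSet_Iic, compl_Iic, measureReal_def,
    Measure.map_apply hX measurableSet_Ioi]
  rfl

theorem tail_hinv {Ω : Type*} [MeasurableSpace Ω] (P : Measure Ω) [IsProbabilityMeasure P]
    (X : Ω → ℝ) (hX : Measurable X) (y : ℝ) (hy : 0 < y) : tail P X (hinv P X y) ≤ y⁻¹ := by
  have : IsProbabilityMeasure (P.map X) := Measure.isProbabilityMeasure_map hX.aemeasurable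
  set S := {x : ℝ | 0 ≤ x ∧ tail P X x ≤ y⁻¹} with hS
  have hne : S.Nonempty := by
    have h1 : Tendsto (fun x => tail P X x) atTop (nhds (1 - 1)) := by
      simp_rw [tail_eq_cdf P X hX]
      exact tendsto_const_nhds.sub (tendsto_cdf_atTop _)
    rw [sub_self] at h1
    obtain ⟨x, hx1, hx2⟩ := ((h1.eventually (gt_mem_nhds (inv_pos.2 hy))).and
      (eventually_ge_atTop 0)).exists
    exact ⟨x, hx2, hx1.le⟩
  have hgt : ∀ x, sInf S < x → tail P X x ≤ y⁻¹ := by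
    intro x hx
    obtain ⟨z, hz, hzx⟩ := exists_lt_of_csInf_lt hne hx
    exact (tail_antitone P X hzx.le).trans hz.2
  have hcont : Tendsto (fun x => tail P X x) (nhdsWithin (sInf S) (Ioi (sInf S)))
      (nhds (tail P X (sInf S))) := by
    simp_rw [tail_eq_cdf P X hX]
    refine tendsto_const_nhds.sub ?_
    exact (((cdf (P.map X)).right_continuous (sInf S)).mono Ioi_subset_Ici_self)
  refine le_of_tendsto hcont ?_
  filter_upwards [self_mem_nhdsWithin] with x hx
  exact hgt x hx

theorem log_growth (δ : ℕ → ℝ) (hδpos : ∀ N, 0 < δ N)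
    (hδslow : ∀ e : ℝ, 0 < e → Tendsto (fun N : ℕ => δ N * (N : ℝ) ^ e) atTop atTop)
    (K B κ : ℝ) (hB : 0 < B) (hκ : 0 < κ) :
    ∀ᶠ N : ℕ in atTop, B * (Real.logb 2 N) ^ K ≤ κ * (δ N * N) := by
  have h1 : ∀ᶠ N : ℕ in atTop, (Real.log (N:ℝ)) ^ K ≤ (N:ℝ) ^ (1/2 : ℝ) := by
    have h := (isLittleO_log_rpow_rpow_atTop K (show (0:ℝ) < 1/2 by norm_num)).bound
      (show (0:ℝ) < 1 by norm_num)
    have h' := tendsto_natCast_atTop_atTop (R := ℝ) |>.eventually h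
    filter_upwards [h'] with N hN
    rw [one_mul] at hN
    calc _ ≤ _ := le_abs_self _
      _ ≤ _ := hN
      _ = _ := abs_of_nonneg (by positivity)
  have h2 := (hδslow (1/2) (by norm_num)).eventually_ge_atTop (B * (Real.log 2 ^ K)⁻¹ / κ)
  filter_upwards [h1, h2, eventually_ge_atTop 1] with N hN1 hN2 hN3
  have hl2 : 0 < Real.log 2 := Real.log_pos (by norm_num)
  have hNR : (1:ℝ) ≤ N := by exact_mod_cast hN3
  have hl : 0 ≤ Real.log N := Real.log_nonneg hNR
  rw [div_le_iff₀ hκ] at hN2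
  calc B * (Real.logb 2 N) ^ K = (B * (Real.log 2 ^ K)⁻¹) * (Real.log N) ^ K := by
        rw [Real.logb, Real.div_rpow hl hl2.le]; ring
    _ ≤ (δ N * (N:ℝ) ^ (1/2:ℝ) * κ) * (N:ℝ) ^ (1/2 : ℝ) := by
        have := hδpos N
        gcongr
    _ = κ * (δ N * ((N:ℝ) ^ (1/2:ℝ) * (N:ℝ) ^ (1/2 : ℝ))) := by ring
    _ = _ := by
        rw [← Real.rpow_add (by linarith)]; norm_num

theorem domW_measurable {Ω : Type*} (mm : MeasurableSpace Ω) (N m : ℕ)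
    (Y : ℕ → Fin N → Fin 2 → Ω → ℝ) (n : ℕ)
    (hY : ∀ k, n - m ≤ k → ∀ i j, Measurable[mm] (Y k i j)) :
    Measurable[mm] fun ω => domW N m (fun k i j => Y k i j ω) n := by
  unfold domW
  refine Measurable.iSup fun p => ?_
  refine Measurable.min (hY n (by omega) _ _) ?_
  exact measurable_brw mm N (fun l i j => Y (n - m + l) i j) _ (fun l _ i j => hY _ (by omega) _ _) _

theorem condExp_bound {Ω : Type*} (F G : MeasurableSpace Ω) [mΩ : MeasurableSpace Ω] (P : Measure Ω)
    [IsProbabilityMeasure P] (hF : F ≤ mΩ) (hG : G ≤ mΩ) (hind : Indep G F P)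
    (f W : Ω → ℝ) (p B : ℝ) (hp : 0 < p) (hB : 0 ≤ B) (hf0 : ∀ ω, 0 ≤ f ω)
    (hfW : ∀ ω, f ω ≤ W ω) (hW : Measurable[G] W)
    (hmom : ∫⁻ ω, ENNReal.ofReal (W ω ^ p) ∂P ≤ ENNReal.ofReal B) :
    ∀ᵐ ω ∂P, (P[fun ω => f ω ^ p | F]) ω ≤ B := by
  by_cases hfi : Integrable (fun ω => f ω ^ p) P
  swap
  · rw [condExp_of_not_integrable hfi]
    exact ae_of_all _ fun ω => hB
  have hW0 : ∀ ω, 0 ≤ W ω := fun ω => (hf0 ω).trans (hfW ω)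
  have hWpG : Measurable[G] fun ω => W ω ^ p := hW.pow_const p
  have hWp : Measurable fun ω => W ω ^ p := hWpG.mono hG le_rfl
  have hWnn : 0 ≤ᵐ[P] fun ω => W ω ^ p := ae_of_all _ fun ω => Real.rpow_nonneg (hW0 ω) _
  have hWi : Integrable (fun ω => W ω ^ p) P := by
    refine ⟨hWp.aestronglyMeasurable, ?_⟩
    rw [hasFiniteIntegral_iff_ofReal hWnn]
    exact hmom.trans_lt ENNReal.ofReal_lt_top
  have h1 := condExp_mono (m := F) hfi hWi
    (ae_of_all _ fun ω => Real.rpow_le_rpow (hf0 ω) (hfW ω) hp.le)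
  have h2 := condExp_indep_eq hG hF hWpG.stronglyMeasurable hind
  have h3 : ∫ ω, W ω ^ p ∂P ≤ B := by
    rw [integral_eq_lintegral_of_nonneg_ae hWnn hWp.aestronglyMeasurable]
    exact ENNReal.toReal_le_of_le_ofReal hB hmom
  filter_upwards [h1, h2] with ω e1 e2
  rw [e2] at e1
  exact e1.trans h3


/-- Corollary "upper": let `p ∈ [0, 2α)`. For every `0 < ε ≤ (2α−p)/2` there
exists `N_ε` such that for all `N > N_ε` and all `n ≥ 0`, almost surely
`E[(θ_{n+1} − θ_n)^p | F_{n−m_N}] ≤ (1 + 4p/(2α−p)) (δ_N/log₂ N)^{p/(2α+ε)}`,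
where `θ = θ^{(m_N)}` with `m_N = log₂ N + log₂ δ_N`. -/
theorem stmt_2 {Ω : Type*} [MeasurableSpace Ω] (P : Measure Ω) [IsProbabilityMeasure P]
    (X : Ω → ℝ) (hXmeas : Measurable X) (hXpos : ∀ ω, 0 ≤ X ω)
    (α : ℝ) (hα : 0 < α)
    (hRV : ∀ l : ℝ, 0 < l →
      Tendsto (fun x => tail P X x / tail P X (l * x)) atTop (nhds (l ^ α)))
    (ξ : (N : ℕ) → ℕ → Fin N → Fin 2 → Ω → ℝ)
    (hξmeas : ∀ N n i j, Measurable (ξ N n i j))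
    (hξpos : ∀ N n i j ω, 0 ≤ ξ N n i j ω)
    (hξdist : ∀ N n i j, Measure.map (ξ N n i j) P = Measure.map X P)
    (hξindep : ∀ N, iIndepFun
      (fun p : ℕ × Fin N × Fin 2 => ξ N p.1 p.2.1 p.2.2) P)
    (δ : ℕ → ℝ) (hδpos : ∀ N, 0 < δ N) (hδ0 : Tendsto δ atTop (nhds 0))
    (hδslow : ∀ e : ℝ, 0 < e → Tendsto (fun N : ℕ => δ N * (N : ℝ) ^ e) atTop atTop)
    (mN : ℕ → ℕ) (hmN1 : ∀ N, 1 ≤ mN N)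
    (hmN : ∀ N : ℕ, (mN N : ℝ) = Real.logb 2 N + Real.logb 2 (δ N))
    (p : ℝ) (hp0 : 0 ≤ p) (hp : p < 2 * α)
    (ε : ℝ) (hε0 : 0 < ε) (hε : ε ≤ (2 * α - p) / 2) :
    ∃ Nε : ℕ, ∀ N : ℕ, Nε < N → ∀ n : ℕ,
      ∀ᵐ ω ∂P,
        (P[fun ω' => (theta N (mN N) (fun k i j => ξ N k i j ω' / cN P X N) (n + 1) -
              theta N (mN N) (fun k i j => ξ N k i j ω' / cN P X N) n) ^ p |
            brwFilt N (ξ N) (n - mN N)]) ω ≤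
          (1 + 4 * p / (2 * α - p)) * (δ N / Real.logb 2 N) ^ (p / (2 * α + ε)) := by
  rcases hp0.eq_or_lt with h0 | hp1
  · subst h0
    refine ⟨0, fun N _ n => ?_⟩
    have hle : brwFilt N (ξ N) (n - mN N) ≤ (inferInstance : MeasurableSpace Ω) :=
      iSup_le fun k => iSup_le fun _ => iSup_le fun i => iSup_le fun j => (hξmeas N k i j).comap_le
    simp only [Real.rpow_zero]
    rw [condExp_const hle]
    simp
  have hη : 0 < ε / 4 := by linarith
  obtain ⟨x0, hx0, hpos, hpot⟩ := potter (tail P X) (tail_antitone P X)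
    (fun x => ENNReal.toReal_nonneg) α (ε / 4) hη (by linarith) hRV
  set a := α + ε / 4 with ha
  set b := α - ε / 4 with hb
  set C : ℝ := 2 ^ a with hC
  have hC0 : 0 < C := by positivity
  have ev1 : ∀ᶠ N : ℕ in atTop, δ N ≤ 1 := hδ0.eventually (ge_mem_nhds one_pos)
  have ev2 : ∀ᶠ N : ℕ in atTop,
      C ^ 2 * 2 ^ a * (δ N) ^ (1 / (2 * α + ε) * (ε / 2)) ≤ 1 := by
    have h := (hδ0.rpow_const (p := 1 / (2 * α + ε) * (ε / 2)) (Or.inr (by positivity))).const_mul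
      (C ^ 2 * 2 ^ a)
    rw [Real.zero_rpow (by positivity), mul_zero] at h
    exact h.eventually (ge_mem_nhds one_pos)
  have ev3 := log_growth δ hδpos hδslow (2 * a + 1) (C * 4 ^ a) (2 * 2 ^ a) (by positivity)
    (by positivity)
  have ev4 := log_growth δ hδpos hδslow a (C * 2 ^ a) (2 * tail P X x0) (by positivity)
    (mul_pos two_pos (hpos x0))
  have ev5 : ∀ᶠ N : ℕ in atTop, (tail P X x0)⁻¹ < N :=
    (tendsto_natCast_atTop_atTop (R := ℝ)).eventually_gt_atTop _
  obtain ⟨N0, hN0⟩ := eventually_atTop.1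
    (ev1.and (ev2.and (ev3.and (ev4.and (ev5.and (eventually_ge_atTop 2))))))
  refine ⟨N0, fun N hNN n => ?_⟩
  obtain ⟨v1, v2, v3, v4, v5, v6⟩ := hN0 N hNN.le
  set L := Real.logb 2 N with hLdef
  have hNR : (2:ℝ) ≤ N := by exact_mod_cast v6
  have hL : 1 ≤ L := by
    rw [hLdef, Real.le_logb_iff_rpow_le (by norm_num) (by linarith)]
    simpa using hNR
  have hδN := hδpos N
  set m := mN N with hm
  have hm' : (m : ℝ) = L + Real.logb 2 (δ N) := hmN N
  have hmL : (m : ℝ) ≤ L := by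
    have : Real.logb 2 (δ N) ≤ 0 := Real.logb_nonpos (by norm_num) hδN.le v1
    linarith
  have h2m : (2:ℝ) ^ m = N * δ N := by
    rw [← Real.rpow_natCast, hm', hLdef, Real.rpow_add (by norm_num),
      Real.rpow_logb (by norm_num) (by norm_num) (by linarith),
      Real.rpow_logb (by norm_num) (by norm_num) hδN]
  set c := cN P X N with hc
  have htail : tail P X c ≤ (2 * N * L)⁻¹ := tail_hinv P X hXmeas _ (by positivity)
  have hcx0 : x0 ≤ c := by
    by_contra hcon
    push Not at hcon
    have h1 := (tail_antitone P X hcon.le).trans htail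
    rw [inv_lt_comm₀ (hpos _) (by linarith)] at v5
    have h2 : (2 * N * L : ℝ)⁻¹ ≤ (N : ℝ)⁻¹ := by
      gcongr
      nlinarith
    linarith
  have hc0 : 0 < c := by linarith
  set r := (δ N / L) ^ (1 / (2 * α + ε)) with hr
  have hdL : 0 < δ N / L := by positivity
  have hr0 : 0 < r := by positivity
  have hDr : C ^ 2 * 2 ^ a * r ^ (ε / 2) ≤ 1 := by
    refine le_trans ?_ v2
    rw [hr, ← Real.rpow_mul hdL.le]
    gcongr
    exact div_le_self hδN.le hL
  have hnum := numeric (tail P X) (fun x => ENNReal.toReal_nonneg) α p ε a b (α + p / 2) C x0 c N L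
    (δ N) r m hα hp0 hp hε0 hε rfl rfl rfl hC0 hx0 hpot hpos (by linarith) hL hδN v1 (hmN1 N) hmL
    h2m hr hDr v3 v4 hcx0 htail
  -- the scaled variables
  let Y : ℕ → Fin N → Fin 2 → Ω → ℝ := fun k i j ω => ξ N k i j ω / c
  have hYm : ∀ k i j, Measurable (Y k i j) := fun k i j => (hξmeas N k i j).div_const c
  have hY0 : ∀ k i j ω, 0 ≤ Y k i j ω := fun k i j ω => div_nonneg (hξpos N k i j ω) hc0.le
  have hYind : iIndepFun (fun p : ℕ × Fin N × Fin 2 => Y p.1 p.2.1 p.2.2) P :=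
    (hξindep N).comp (fun _ x => x / c) (fun _ => measurable_id.div_const c)
  have hdm : Measurable (fun x : ℝ => x / c) := measurable_id.div_const c
  let ν : Measure ℝ := (P.map X).map (fun x => x / c)
  have : IsProbabilityMeasure (P.map X) := Measure.isProbabilityMeasure_map hXmeas.aemeasurable
  have hνp : IsProbabilityMeasure ν := Measure.isProbabilityMeasure_map hdm.aemeasurable
  have hν : ∀ k i j, Measure.map (Y k i j) P = ν := by
    intro k i j
    have := Measure.map_map (μ := P) hdm (hξmeas N k i j)
    rw [hξdist] at this
    exact this.symm
  have hνt : ∀ x, ν (Ioi x) = ENNReal.ofReal (tail P X (c * x)) := by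
    intro x
    rw [tail, ENNReal.ofReal_toReal (measure_ne_top _ _)]
    change ((P.map X).map (fun x => x / c)) (Ioi x) = _
    rw [Measure.map_apply hdm measurableSet_Ioi, Measure.map_apply hXmeas (hdm measurableSet_Ioi)]
    congr 1
    ext ω
    simp only [mem_preimage, mem_Ioi, mem_ofPred_eq]
    rw [lt_div_iff₀ hc0, mul_comm]
  have hmeasW : ∀ x, r ≤ x → P {ω | x < domW N m (fun k i j => Y k i j ω) n} ≤
      ENNReal.ofReal ((r / x) ^ (α + p / 2)) := by
    intro x hx
    refine (meas_domW P N m (by omega) Y hYm hYind ν hν n x (by linarith)).trans ?_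
    refine le_trans (le_of_eq ?_) (ENNReal.ofReal_le_ofReal (hnum x hx))
    have n1 := (hpos (c * x)).le
    have n2 := (hpos (c * (x / 2))).le
    have n3 := (hpos (c * (x / (2 * m)))).le
    rw [hνt, hνt, hνt, ENNReal.ofReal_mul (by positivity), ENNReal.ofReal_mul (by positivity),
      ENNReal.ofReal_mul (by positivity), ENNReal.ofReal_mul (by positivity),
      ENNReal.ofReal_add (by positivity) (by positivity),
      ENNReal.ofReal_mul (by positivity), ENNReal.ofReal_mul (by positivity),
      ENNReal.ofReal_pow (by positivity), ENNReal.ofReal_pow (by positivity),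
      ENNReal.ofReal_pow (by positivity), ENNReal.ofReal_natCast, ENNReal.ofReal_natCast]
    simp
  have hWm : Measurable fun ω => domW N m (fun k i j => Y k i j ω) n :=
    domW_measurable _ N m Y n (fun k _ i j => hYm k i j)
  have hmom := moment P (fun ω => domW N m (fun k i j => Y k i j ω) n) hWm
    (fun ω => domW_nonneg N m _ (fun k i j => hY0 k i j ω) n) r p (α + p / 2) hr0 hp1
    (by linarith) hmeasW
  have hrp : (δ N / L) ^ (p / (2 * α + ε)) = r ^ p := by
    rw [hr, ← Real.rpow_mul hdL.le]
    congr 1; ring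
  have h2p : 0 < 2 * α - p := by linarith
  rw [hrp]
  refine condExp_bound (brwFilt N (ξ N) (n - m))
    (⨆ q ∈ {q : ℕ × Fin N × Fin 2 | n - m ≤ q.1},
      MeasurableSpace.comap (ξ N q.1 q.2.1 q.2.2) inferInstance) P ?_ ?_ ?_ _
    (fun ω => domW N m (fun k i j => Y k i j ω) n) p _ hp1 (by positivity)
    (fun ω => theta_mono N m _ n) (fun ω => theta_le N m (by omega) _ (fun k i j => hY0 k i j ω) n)
    ?_ (hmom.trans (ENNReal.ofReal_le_ofReal ?_))
  · exact iSup_le fun k => iSup_le fun _ => iSup_le fun i => iSup_le fun j =>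
      (hξmeas N k i j).comap_le
  · exact iSup₂_le fun q _ => (hξmeas N _ _ _).comap_le
  · refine indep_of_indep_of_le_right (indep_blocks P _ (fun q => hξmeas N _ _ _) (hξindep N)
      {q | n - m ≤ q.1} {q | q.1 < n - m} ?_) ?_
    · rw [Set.disjoint_left]
      intro q h1 h2
      simp only [mem_ofPred_eq] at h1 h2
      omega
    · refine iSup_le fun k => iSup_le fun hk => iSup_le fun i => iSup_le fun j => ?_
      exact le_iSup₂_of_le (f := fun (q : ℕ × Fin N × Fin 2)
        (_ : q ∈ {q : ℕ × Fin N × Fin 2 | q.1 < n - m}) =>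
        MeasurableSpace.comap (ξ N q.1 q.2.1 q.2.2) inferInstance) (k, i, j) hk le_rfl
  · refine domW_measurable _ N m Y n (fun k hk i j => ?_)
    refine Measurable.div_const ?_ c
    refine Measurable.mono (comap_measurable (ξ N k i j)) ?_ le_rfl
    exact le_iSup₂_of_le (f := fun (q : ℕ × Fin N × Fin 2)
      (_ : q ∈ {q : ℕ × Fin N × Fin 2 | n - m ≤ q.1}) =>
      MeasurableSpace.comap (ξ N q.1 q.2.1 q.2.2) inferInstance) (k, i, j) hk le_rfl
  · gcongr ?_ * _
    have : p / (α + p / 2 - p) = 2 * p / (2 * α - p) := by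
      rw [show α + p / 2 - p = (2 * α - p) / 2 by ring]
      field_simp
    rw [this]
    gcongr
    norm_num

end
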